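/- arXiv:2407.20831 — 2 statements merged into one kernel-verified Lean document; each statement's English description precedes it below -/
import Mathlib

section
/- Suppose φ is entire on ℂ^n, belongs to the Fock space F(ℂ^n), and satisfies sup_{a∈ℝ^n} ∫_{ℂ^n} |φ(z+ia)|² e^{-|z|²/2} dz < ∞ together with sup_{y∈ℝ^n} ∫_{ℝ^n} |φ(x+iy)| e^{-|x|²/4} dx < ∞. Then there exists m ∈ L^∞(ℝ^n) with φ = Gm. -/
open MeasureTheory Complex

lemma hol_param {n : ℕ} (F : (Fin n → ℝ) → ℂ → ℂ) (B : ℂ → ℝ)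
    (hc : Continuous (Function.uncurry F)) (hd : ∀ x, Differentiable ℂ (F x))
    (hi : ∀ w, Integrable (fun x => F x w)) (hB : Continuous B)
    (hb : ∀ w, ∫ x, ‖F x w‖ ≤ B w) : Differentiable ℂ (fun w => ∫ x, F x w) := by
  intro c
  have hKm : StronglyMeasurable (fun w => ∫ x, F x w) :=
    StronglyMeasurable.integral_prod_right (f := fun w x => F x w)
      (by
        have : Continuous (Function.uncurry fun w x => F x w) := hc.comp continuous_swap
        exact this.stronglyMeasurable)
  have hKc : CircleIntegrable (fun w => ∫ x, F x w) c (1 : NNReal) := by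
    have h1 : IntervalIntegrable (fun θ : ℝ => B (circleMap c (1 : NNReal) θ)) volume 0
        (2 * Real.pi) := (hB.comp (continuous_circleMap c _)).intervalIntegrable _ _
    refine IntervalIntegrable.mono_fun' h1 ?_ ?_
    · exact (hKm.comp_measurable (continuous_circleMap c _).measurable).aestronglyMeasurable
    · exact Filter.Eventually.of_forall fun θ =>
        (norm_integral_le_integral_norm _).trans (hb _)
  have hP := hasFPowerSeriesOn_cauchy_integral hKc one_pos
  refine hP.analyticAt.differentiableAt.congr_of_eventuallyEq ?_
  filter_upwards [Metric.ball_mem_nhds c one_pos] with w hw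
  have hwball : w ∈ Metric.ball c ((1 : NNReal) : ℝ) := by simpa using hw
  have h2 : ∀ x, F x w = (2 * Real.pi * I : ℂ)⁻¹ •
      ∮ z in C(c, (1 : NNReal)), (z - w)⁻¹ • F x z := fun x =>
    (two_pi_I_inv_smul_circleIntegral_sub_inv_smul_of_differentiable_on_off_countable
      Set.countable_empty hwball (hd x).continuous.continuousOn
      (fun y _ => (hd x) y)).symm
  have hk : Continuous fun θ : ℝ => deriv (circleMap c (1 : NNReal)) θ *
      (circleMap c (1 : NNReal) θ - w)⁻¹ := by
    simp only [deriv_circleMap]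
    refine Continuous.mul (by fun_prop) (Continuous.inv₀ (by fun_prop) fun θ => ?_)
    exact sub_ne_zero.2 (circleMap_ne_mem_ball hwball θ)
  simp_rw [h2]
  rw [integral_smul]
  congr 1
  simp only [circleIntegral, smul_eq_mul, ← mul_assoc]
  rw [← intervalIntegral_integral_swap]
  · simp_rw [integral_const_mul]
  · have hcont : Continuous (Function.uncurry fun (θ : ℝ) (x : Fin n → ℝ) =>
        deriv (circleMap c (1 : NNReal)) θ * (circleMap c (1 : NNReal) θ - w)⁻¹ *
          F x (circleMap c (1 : NNReal) θ)) := by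
      have h3 : Continuous fun p : ℝ × (Fin n → ℝ) => F p.2 (circleMap c (1 : NNReal) p.1) :=
        hc.comp (continuous_snd.prodMk ((continuous_circleMap c _).comp continuous_fst))
      exact (hk.comp continuous_fst).mul h3
    rw [integrable_prod_iff hcont.aestronglyMeasurable]
    refine ⟨Filter.Eventually.of_forall fun θ => by
      simpa only [Function.uncurry] using (hi _).const_mul _, ?_⟩
    have h4 : IntervalIntegrable (fun θ : ℝ => ‖deriv (circleMap c (1 : NNReal)) θ *
      (circleMap c (1 : NNReal) θ - w)⁻¹‖ * B (circleMap c (1 : NNReal) θ)) volume 0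
        (2 * Real.pi) :=
      (hk.norm.mul (hB.comp (continuous_circleMap c _))).intervalIntegrable _ _
    rw [intervalIntegrable_iff] at h4
    refine Integrable.mono' h4 ?_ ?_
    · exact (hcont.norm.stronglyMeasurable.integral_prod_right').aestronglyMeasurable
    · refine Filter.Eventually.of_forall fun θ => ?_
      simp only [Function.uncurry, norm_mul (_ * _) (F _ _), integral_const_mul]
      rw [Real.norm_of_nonneg (mul_nonneg (norm_nonneg _)
        (integral_nonneg fun _ => norm_nonneg _))]
      exact mul_le_mul_of_nonneg_left (hb _) (norm_nonneg _)

lemma contour_shift {n : ℕ} (g : (Fin n → ℂ) → ℂ) (hg : Differentiable ℂ g) (v : Fin n → ℝ)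
    (B : ℝ → ℝ) (hB : Continuous B)
    (hi : ∀ t : ℝ, Integrable (fun x : Fin n → ℝ => g fun j => (x j : ℂ) + I * ((t * v j : ℝ) : ℂ)))
    (hb : ∀ t : ℝ, ∫ x : Fin n → ℝ, ‖g fun j => (x j : ℂ) + I * ((t * v j : ℝ) : ℂ)‖ ≤ B t) :
    ∫ x : Fin n → ℝ, g (fun j => (x j : ℂ) + I * (v j : ℂ)) =
      ∫ x : Fin n → ℝ, g (fun j => (x j : ℂ)) := by
  set F : (Fin n → ℝ) → ℂ → ℂ := fun x w => g fun j => (x j : ℂ) + w * (v j : ℂ) with hF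
  have key : ∀ (x : Fin n → ℝ) (w : ℂ), F x w =
      (fun x : Fin n → ℝ => g fun j => (x j : ℂ) + I * ((w.im * v j : ℝ) : ℂ)) (x + w.re • v) := by
    intro x w
    simp only [hF]
    congr 1
    funext j
    have hw : w * (v j : ℂ) = (w.re + w.im * I) * (v j : ℂ) := by rw [re_add_im]
    rw [hw]
    simp only [Pi.add_apply, Pi.smul_apply, smul_eq_mul, ofReal_add, ofReal_mul]
    ring
  have hd : Differentiable ℂ (fun w => ∫ x, F x w) := by
    apply hol_param F (fun w => B w.im)
    · exact hg.continuous.comp (by fun_prop)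
    · intro x
      exact hg.comp (by fun_prop)
    · intro w
      simp_rw [key]
      exact (hi w.im).comp_add_right (w.re • v)
    · fun_prop
    · intro w
      simp_rw [key]
      rw [integral_add_right_eq_self (fun x : Fin n → ℝ =>
        ‖g fun j => (x j : ℂ) + I * ((w.im * v j : ℝ) : ℂ)‖)]
      exact hb w.im
  have him : ∀ w : ℂ, ∫ x, F x w =
      ∫ x : Fin n → ℝ, g fun j => (x j : ℂ) + I * ((w.im * v j : ℝ) : ℂ) := by
    intro w
    simp_rw [key]
    rw [integral_add_right_eq_self (fun x : Fin n → ℝ =>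
        g fun j => (x j : ℂ) + I * ((w.im * v j : ℝ) : ℂ))]
  have hder : ∀ w, deriv (fun w => ∫ x, F x w) w = 0 := by
    intro w
    have h1 := (hd w).hasDerivAt
    have h2 : HasDerivAt (fun z : ℂ => ∫ x, F x (w + z)) (deriv (fun w => ∫ x, F x w) w) 0 := by
      refine HasDerivAt.comp_const_add (f := fun w => ∫ x, F x w) w 0 ?_
      rwa [add_zero]
    have h3 := HasDerivAt.comp_ofReal (z := 0) (by simpa using h2)
    have h4 : (fun s : ℝ => ∫ x, F x (w + (s : ℂ))) = fun _ => ∫ x, F x w := by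
      funext s
      rw [him, him]
      simp
    rw [h4] at h3
    exact h3.unique (hasDerivAt_const _ _)
  have := is_const_of_deriv_eq_zero hd hder I 0
  simpa [hF] using this

lemma fourier_inv_pi {n : ℕ} (f : (Fin n → ℝ) → ℂ) (hf : Continuous f) (hfi : Integrable f)
    (hh : Integrable fun ξ : Fin n → ℝ =>
      ∫ x : Fin n → ℝ, f x * exp (-(I * ∑ j, (x j : ℂ) * (ξ j : ℂ)))) (x : Fin n → ℝ) :
    f x = ∫ ξ : Fin n → ℝ, (((2 * Real.pi) ^ n)⁻¹ : ℝ) *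
      (∫ x : Fin n → ℝ, f x * exp (-(I * ∑ j, (x j : ℂ) * (ξ j : ℂ)))) *
        exp (I * ∑ j, (x j : ℂ) * (ξ j : ℂ)) := by
  set fh : (Fin n → ℝ) → ℂ := fun ξ =>
    ∫ x : Fin n → ℝ, f x * exp (-(I * ∑ j, (x j : ℂ) * (ξ j : ℂ))) with hfh
  let E := EuclideanSpace ℝ (Fin n)
  have hinner : ∀ v w : EuclideanSpace ℝ (Fin n), inner ℝ v w = ∑ j, v j * w j := by
    intro v w
    simp [PiLp.inner_apply, mul_comm]
  have hmp := PiLp.volume_preserving_ofLp (Fin n)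
  have hme : MeasurableEmbedding (@WithLp.ofLp 2 (Fin n → ℝ)) :=
    (MeasurableEquiv.toLp 2 (Fin n → ℝ)).symm.measurableEmbedding
  let fE : E → ℂ := fun v => f v.ofLp
  have hfEi : Integrable fE := (hmp.integrable_comp_emb hme).2 hfi
  have hfEc : Continuous fE := hf.comp (PiLp.continuous_ofLp 2 _)
  have hF : ∀ w : E, FourierTransform.fourier fE w = fh ((2 * Real.pi) • w.ofLp) := by
    intro w
    rw [Real.fourier_eq']
    simp only [hfh]
    rw [← hmp.integral_comp hme]
    congr 1
    funext v
    simp only [fE, smul_eq_mul]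
    rw [mul_comm, hinner]
    congr 2
    push_cast
    simp only [Finset.mul_sum, Finset.sum_mul, Pi.smul_apply, smul_eq_mul, ← Finset.sum_neg_distrib]
    refine Finset.sum_congr rfl fun j _ => ?_
    push_cast
    ring
  have hFi : Integrable (FourierTransform.fourier fE) := by
    have : FourierTransform.fourier fE = fun w : E => fh ((2 * Real.pi) • w.ofLp) := funext hF
    rw [this]
    exact (hmp.integrable_comp_emb hme (g := fun w => fh ((2 * Real.pi) • w))).2
      (hh.comp_smul Real.two_pi_pos.ne')
  have := hfEi.fourierInv_fourier_eq hFi (v := WithLp.toLp 2 x) hfEc.continuousAt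
  rw [Real.fourierInv_eq'] at this
  simp_rw [hF] at this
  have h1 : fE (WithLp.toLp 2 x) = f x := rfl
  rw [h1] at this
  rw [← this]
  have h2 := hmp.integral_comp hme (fun w : Fin n → ℝ =>
    (fun ξ : Fin n → ℝ => fh ξ * exp (I * ∑ j, (x j : ℂ) * (ξ j : ℂ))) ((2 * Real.pi) • w))
  rw [Measure.integral_comp_smul volume (fun ξ : Fin n → ℝ => fh ξ * exp (I * ∑ j, (x j : ℂ) * (ξ j : ℂ)))] at h2
  simp_rw [mul_assoc]
  rw [integral_const_mul]
  trans
  swap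
  · convert h2 using 1
    rw [abs_of_pos (by positivity)]
    simp [hfh]
  · congr 1
    funext v
    simp only [smul_eq_mul]
    rw [mul_comm, hinner]
    congr 2
    push_cast
    simp only [Finset.mul_sum, Finset.sum_mul, Pi.smul_apply, smul_eq_mul]
    refine Finset.sum_congr rfl fun j _ => ?_
    push_cast
    ring

/-- sufficiency.  If `φ` is entire, lies in the Fock space, has
uniformly bounded `L²` norms along imaginary translates, and satisfies the
stronger uniform `L¹` condition, then `φ = Gm` for some `m ∈ L^∞(ℝ^n)`. -/
theorem gauss_bargmann_sufficiency
    (n : ℕ) (φ : (Fin n → ℂ) → ℂ)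
    (hent : Differentiable ℂ φ)
    (hfock : Integrable (fun z : Fin n → ℂ =>
      ‖φ z‖ ^ 2 * Real.exp (-(∑ j, ‖z j‖ ^ 2) / 2)))
    (hL2 : ∃ C : ℝ, ∀ a : Fin n → ℝ,
      Integrable (fun z : Fin n → ℂ =>
        ‖φ (fun j => z j + Complex.I * (a j : ℂ))‖ ^ 2 *
          Real.exp (-(∑ j, ‖z j‖ ^ 2) / 2)) ∧
      (∫ z : Fin n → ℂ,
        ‖φ (fun j => z j + Complex.I * (a j : ℂ))‖ ^ 2 *
          Real.exp (-(∑ j, ‖z j‖ ^ 2) / 2)) ≤ C)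
    (hL1 : ∃ C : ℝ, ∀ y : Fin n → ℝ,
      Integrable (fun x : Fin n → ℝ =>
        ‖φ (fun j => (x j : ℂ) + Complex.I * (y j : ℂ))‖ *
          Real.exp (-(∑ j, (x j) ^ 2) / 4)) ∧
      (∫ x : Fin n → ℝ,
        ‖φ (fun j => (x j : ℂ) + Complex.I * (y j : ℂ))‖ *
          Real.exp (-(∑ j, (x j) ^ 2) / 4)) ≤ C) :
    ∃ m : (Fin n → ℝ) → ℂ, (∃ M : ℝ, ∀ ξ, ‖m ξ‖ ≤ M) ∧
      ∀ z : Fin n → ℂ, φ z =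
        Complex.exp ((∑ j, (z j) ^ 2) / 4) *
          ∫ ξ : Fin n → ℝ, m ξ * (Real.exp (-∑ j, (ξ j) ^ 2) : ℂ) *
            Complex.exp (Complex.I * ∑ j, z j * (ξ j : ℂ)) := by
  obtain ⟨C, hC⟩ := hL1
  set h : (Fin n → ℂ) → ℂ := fun z => φ z * exp (-(∑ j, (z j) ^ 2) / 4) with hh
  have hdiff : Differentiable ℂ h := by
    apply hent.mul
    fun_prop
  have hnorm : ∀ x y : Fin n → ℝ, ‖h fun j => (x j : ℂ) + I * (y j : ℂ)‖ =
      (‖φ fun j => (x j : ℂ) + I * (y j : ℂ)‖ * Real.exp (-(∑ j, (x j) ^ 2) / 4)) *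
        Real.exp ((∑ j, (y j) ^ 2) / 4) := by
    intro x y
    simp only [hh, norm_mul, Complex.norm_exp]
    rw [mul_assoc, ← Real.exp_add]
    congr 2
    have : (-(∑ j, ((x j : ℂ) + I * (y j : ℂ)) ^ 2) / 4) =
        ((-(∑ j, (x j) ^ 2) / 4 + (∑ j, (y j) ^ 2) / 4 : ℝ) : ℂ) +
          ((-(∑ j, x j * y j) / 2 : ℝ) : ℂ) * I := by
      have h1 : ∀ j, ((x j : ℂ) + I * (y j : ℂ)) ^ 2 =
          (x j : ℂ) ^ 2 - (y j : ℂ) ^ 2 + 2 * I * ((x j : ℂ) * (y j : ℂ)) := by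
        intro j
        linear_combination ((y j : ℂ) ^ 2) * I_sq
      simp_rw [h1]
      rw [Finset.sum_add_distrib, Finset.sum_sub_distrib, ← Finset.mul_sum]
      push_cast
      ring
    rw [this]
    simp only [add_re, ofReal_re, re_ofReal_mul, I_re, mul_zero, add_zero]
  clear_value h
  have hcy : ∀ y : Fin n → ℝ, Continuous fun x : Fin n → ℝ =>
      h fun j => (x j : ℂ) + I * (y j : ℂ) := fun y =>
    hdiff.continuous.comp (by fun_prop)
  have Hi : ∀ y : Fin n → ℝ, Integrable fun x : Fin n → ℝ =>
      h fun j => (x j : ℂ) + I * (y j : ℂ) := by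
    intro y
    rw [← integrable_norm_iff (hcy y).aestronglyMeasurable]
    simp_rw [hnorm]
    exact (hC y).1.mul_const _
  have Hb : ∀ y : Fin n → ℝ, ∫ x : Fin n → ℝ, ‖h fun j => (x j : ℂ) + I * (y j : ℂ)‖ ≤
      C * Real.exp ((∑ j, (y j) ^ 2) / 4) := by
    intro y
    simp_rw [hnorm]
    rw [integral_mul_const]
    exact mul_le_mul_of_nonneg_right (hC y).2 (Real.exp_pos _).le
  set H : (Fin n → ℝ) → ℂ := fun ξ => ∫ x : Fin n → ℝ, h (fun j => (x j : ℂ)) *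
    exp (-(I * ∑ j, (x j : ℂ) * (ξ j : ℂ))) with hH
  have hexp1 : ∀ x ξ : Fin n → ℝ, ‖exp (-(I * ∑ j, (x j : ℂ) * (ξ j : ℂ)))‖ = 1 := by
    intro x ξ
    rw [Complex.norm_exp, Real.exp_eq_one_iff]
    have : -(I * ∑ j, (x j : ℂ) * (ξ j : ℂ)) = ((-∑ j, x j * ξ j : ℝ) : ℂ) * I := by
      push_cast
      ring
    rw [this]
    simp only [re_ofReal_mul, I_re, mul_zero]
  have hi1 : ∀ y ξ : Fin n → ℝ, Integrable fun x : Fin n → ℝ =>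
      (h fun j => (x j : ℂ) + I * (y j : ℂ)) * exp (-(I * ∑ j, (x j : ℂ) * (ξ j : ℂ))) := by
    intro y ξ
    have hc1 : Continuous fun x : Fin n → ℝ => exp (-(I * ∑ j, (x j : ℂ) * (ξ j : ℂ))) := by
      fun_prop
    have hc2 : Continuous fun x : Fin n → ℝ =>
        (h fun j => (x j : ℂ) + I * (y j : ℂ)) * exp (-(I * ∑ j, (x j : ℂ) * (ξ j : ℂ))) :=
      (hcy y).mul hc1
    rw [← integrable_norm_iff hc2.aestronglyMeasurable]
    simp_rw [norm_mul, hexp1, mul_one]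
    exact (Hi y).norm
  have hshift : ∀ y ξ : Fin n → ℝ, ∫ x : Fin n → ℝ, (h fun j => (x j : ℂ) + I * (y j : ℂ)) *
      exp (-(I * ∑ j, (x j : ℂ) * (ξ j : ℂ))) = (Real.exp (-∑ j, y j * ξ j) : ℂ) * H ξ := by
    intro y ξ
    set g : (Fin n → ℂ) → ℂ := fun z => h z * exp (-(I * ∑ j, z j * (ξ j : ℂ))) with hg
    have hgd : Differentiable ℂ g := by
      apply hdiff.mul
      fun_prop
    have gfac : ∀ x v : Fin n → ℝ, (g fun j => (x j : ℂ) + I * (v j : ℂ)) =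
        ((h fun j => (x j : ℂ) + I * (v j : ℂ)) * exp (-(I * ∑ j, (x j : ℂ) * (ξ j : ℂ)))) *
          (Real.exp (∑ j, v j * ξ j) : ℂ) := by
      intro x v
      simp only [hg]
      rw [mul_assoc, ofReal_exp, ← Complex.exp_add]
      congr 2
      simp_rw [add_mul, mul_assoc]
      rw [Finset.sum_add_distrib, ← Finset.mul_sum]
      push_cast
      linear_combination (-∑ j, (v j : ℂ) * (ξ j : ℂ)) * I_sq
    have hs := contour_shift g hgd y
      (fun t => C * Real.exp ((∑ j, (t * y j) ^ 2) / 4) * Real.exp (∑ j, (t * y j) * ξ j))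
      (by fun_prop)
      (by
        intro t
        have := (hi1 (fun j => t * y j) ξ).mul_const (Real.exp (∑ j, (t * y j) * ξ j) : ℂ)
        refine this.congr (Filter.Eventually.of_forall fun x => ?_)
        exact (gfac x (fun j => t * y j)).symm)
      (by
        intro t
        have h1 : ∀ x : Fin n → ℝ, ‖g fun j => (x j : ℂ) + I * ((t * y j : ℝ) : ℂ)‖ =
            ‖h fun j => (x j : ℂ) + I * ((t * y j : ℝ) : ℂ)‖ *
              Real.exp (∑ j, (t * y j) * ξ j) := by
          intro x
          rw [gfac x (fun j => t * y j), norm_mul, norm_mul, hexp1, mul_one, norm_real,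
            Real.norm_of_nonneg (Real.exp_pos _).le]
        simp_rw [h1]
        rw [integral_mul_const]
        exact mul_le_mul_of_nonneg_right (Hb fun j => t * y j) (Real.exp_pos _).le)
    simp_rw [gfac] at hs
    rw [integral_mul_const] at hs
    have h2 : H ξ = ∫ x : Fin n → ℝ, g fun j => (x j : ℂ) := rfl
    rw [h2, ← hs, mul_left_comm, ← ofReal_mul, ← Real.exp_add]
    simp
  have hHb : ∀ ξ, ‖H ξ‖ ≤ C * Real.exp (-∑ j, (ξ j) ^ 2) := by
    intro ξ
    have h1 := hshift (fun j => -2 * ξ j) ξ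
    have h2 : ‖∫ x : Fin n → ℝ, (h fun j => (x j : ℂ) + I * ((-2 * ξ j : ℝ) : ℂ)) *
      exp (-(I * ∑ j, (x j : ℂ) * (ξ j : ℂ)))‖ ≤
        C * Real.exp ((∑ j, (-2 * ξ j) ^ 2) / 4) := by
      refine (norm_integral_le_integral_norm _).trans ?_
      simp_rw [norm_mul, hexp1, mul_one]
      exact Hb fun j => -2 * ξ j
    rw [h1, norm_mul, norm_real, Real.norm_of_nonneg (Real.exp_pos _).le] at h2
    have e1 : -∑ j, -2 * ξ j * ξ j = 2 * ∑ j, (ξ j) ^ 2 := by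
      rw [Finset.mul_sum, ← Finset.sum_neg_distrib]
      exact Finset.sum_congr rfl fun j _ => by ring
    have e2 : (∑ j, (-2 * ξ j) ^ 2) / 4 = ∑ j, (ξ j) ^ 2 := by
      rw [Finset.sum_div]
      exact Finset.sum_congr rfl fun j _ => by ring
    rw [e1, e2] at h2
    have h3 := mul_le_mul_of_nonneg_left h2 (Real.exp_pos (-(2 * ∑ j, (ξ j) ^ 2))).le
    rw [← mul_assoc, ← Real.exp_add, neg_add_cancel, Real.exp_zero, one_mul, mul_left_comm,
      ← Real.exp_add] at h3
    refine h3.trans (le_of_eq ?_)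
    congr 2
    ring
  have hHm : StronglyMeasurable H := by
    apply StronglyMeasurable.integral_prod_right (f := fun (ξ x : Fin n → ℝ) =>
      h (fun j => (x j : ℂ)) * exp (-(I * ∑ j, (x j : ℂ) * (ξ j : ℂ))))
    apply Continuous.stronglyMeasurable
    apply Continuous.mul
    · exact hdiff.continuous.comp (by fun_prop)
    · fun_prop
  have hHintegrable : ∀ y : Fin n → ℝ, Integrable fun ξ : Fin n → ℝ =>
      (Real.exp (-∑ j, y j * ξ j) : ℂ) * H ξ := by
    intro y
    have h1 := (GaussianFourier.integrable_cexp_neg_sum_mul_add (ι := Fin n) (b := fun _ => 1)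
      (fun _ => by simp) (fun j => -(y j : ℂ))).norm.const_mul C
    refine h1.mono' ?_ ?_
    · apply AEStronglyMeasurable.mul _ hHm.aestronglyMeasurable
      apply Continuous.aestronglyMeasurable
      fun_prop
    · refine Filter.Eventually.of_forall fun ξ => ?_
      have h2 : (-∑ i, 1 * (ξ i : ℂ) ^ 2 + ∑ i, -(y i : ℂ) * ξ i) =
          ((-∑ j, y j * ξ j + -∑ j, (ξ j) ^ 2 : ℝ) : ℂ) := by
        push_cast
        simp only [one_mul, neg_mul, Finset.sum_neg_distrib]
        ring
      rw [h2, norm_mul, norm_real, Real.norm_of_nonneg (Real.exp_pos _).le, Complex.norm_exp,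
        ofReal_re, Real.exp_add, mul_left_comm]
      exact mul_le_mul_of_nonneg_left (hHb ξ) (Real.exp_pos _).le
  refine ⟨fun ξ => (((2 * Real.pi) ^ n)⁻¹ : ℝ) * H ξ * (Real.exp (∑ j, (ξ j) ^ 2) : ℂ),
    ⟨((2 * Real.pi) ^ n)⁻¹ * C, fun ξ => ?_⟩, fun z => ?_⟩
  · rw [norm_mul, norm_mul, norm_real, norm_real, Real.norm_of_nonneg (Real.exp_pos _).le,
      Real.norm_of_nonneg (by positivity), mul_assoc]
    refine mul_le_mul_of_nonneg_left ?_ (by positivity)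
    have h3 := mul_le_mul_of_nonneg_right (hHb ξ) (Real.exp_pos (∑ j, (ξ j) ^ 2)).le
    rwa [mul_assoc, ← Real.exp_add, neg_add_cancel, Real.exp_zero, mul_one] at h3
  · have hz : z = fun j => (((z j).re : ℝ) : ℂ) + I * (((z j).im : ℝ) : ℂ) := by
      funext j
      rw [mul_comm I, re_add_im]
    have hφ : φ z = exp ((∑ j, (z j) ^ 2) / 4) * h z := by
      simp only [hh]
      rw [mul_left_comm, ← Complex.exp_add]
      have : (∑ j, z j ^ 2) / 4 + -(∑ j, z j ^ 2) / 4 = 0 := by ring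
      rw [this]
      simp
    rw [hφ]
    congr 1
    have hinv := fourier_inv_pi (fun x : Fin n → ℝ =>
      h fun j => (x j : ℂ) + I * (((z j).im : ℝ) : ℂ)) (hcy fun j => (z j).im)
      (Hi fun j => (z j).im)
      (by
        have := hHintegrable fun j => (z j).im
        refine this.congr (Filter.Eventually.of_forall fun ξ => ?_)
        exact (hshift (fun j => (z j).im) ξ).symm) (fun j => (z j).re)
    simp only [← hz] at hinv
    rw [hinv]
    congr 1
    funext ξ
    rw [hshift (fun j => (z j).im) ξ]
    have e1 : I * ∑ j, z j * (ξ j : ℂ) = ((-∑ j, (z j).im * ξ j : ℝ) : ℂ) +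
        I * ∑ j, ((z j).re : ℂ) * (ξ j : ℂ) := by
      have : ∀ j, z j * (ξ j : ℂ) = ((z j).re : ℂ) * (ξ j : ℂ) +
          I * (((z j).im : ℂ) * (ξ j : ℂ)) := by
        intro j
        conv_lhs => rw [← re_add_im (z j)]
        ring
      simp_rw [this]
      rw [Finset.sum_add_distrib, ← Finset.mul_sum]
      push_cast
      linear_combination (∑ j, ((z j).im : ℂ) * (ξ j : ℂ)) * I_sq
    rw [e1, Complex.exp_add, ← ofReal_exp]
    have e2 : (Real.exp (∑ j, (ξ j) ^ 2) : ℂ) * (Real.exp (-∑ j, (ξ j) ^ 2) : ℂ) = 1 := by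
      rw [← ofReal_mul, ← Real.exp_add]
      simp
    linear_combination (-((((2 * Real.pi) ^ n)⁻¹ : ℝ) * H ξ *
      ((Real.exp (-∑ j, (z j).im * ξ j) : ℝ) : ℂ) *
        exp (I * ∑ j, ((z j).re : ℂ) * (ξ j : ℂ)))) * e2
end

section
/- If f̂ ∈ L^∞(ℝ^n) and φ(z) = e^{z²/4} ∫ f̂(ξ) e^{-|ξ|²} e^{iz·ξ} dξ, then for every t with 0 ≤ t < 1/2 the integral ∫_{ℂ^n} |φ(x+iy)|² e^{-(|x|²+|y|²)/2} e^{(2t/(1+2t))|y|²} dx dy is finite. -/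
open MeasureTheory Complex

/-- Real Gaussian integral with a linear term. -/
lemma gb_gauss_integral (n : ℕ) (b : ℝ) (hb : 0 < b) (c : Fin n → ℝ) :
    Integrable (fun v : Fin n → ℝ => Real.exp (-b * ∑ i, v i ^ 2 + ∑ i, c i * v i)) ∧
    ∫ v : Fin n → ℝ, Real.exp (-b * ∑ i, v i ^ 2 + ∑ i, c i * v i) =
      (Real.pi / b) ^ ((n : ℝ) / 2) * Real.exp ((∑ i, c i ^ 2) / (4 * b)) := by
  have hb' : 0 < (b : ℂ).re := by simpa using hb
  have h1 := GaussianFourier.integrable_cexp_neg_mul_sum_add hb' (fun i => (c i : ℂ))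
  have h2 := GaussianFourier.integral_cexp_neg_mul_sum_add hb' (fun i => (c i : ℂ))
  have e : (fun v : Fin n → ℝ => cexp (-(b : ℂ) * ∑ i, (v i : ℂ) ^ 2 + ∑ i, (c i : ℂ) * v i))
      = fun v => ((Real.exp (-b * ∑ i, v i ^ 2 + ∑ i, c i * v i) : ℝ) : ℂ) := by
    funext v; push_cast; rfl
  rw [e] at h1 h2
  constructor
  · exact h1.re
  · rw [integral_complex_ofReal] at h2
    have : ((Real.pi : ℂ) / b) ^ ((Fintype.card (Fin n) : ℂ) / 2)
        = (((Real.pi / b) ^ ((n : ℝ) / 2) : ℝ) : ℂ) := by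
      rw [Complex.ofReal_cpow (by positivity)]; simp
    rw [this] at h2
    have : cexp ((∑ i, (c i : ℂ) ^ 2) / (4 * b)) = ((Real.exp ((∑ i, c i ^ 2) / (4 * b)) : ℝ) : ℂ) := by
      push_cast; rfl
    rw [this] at h2
    exact_mod_cast h2

lemma gb_gauss_lintegral (n : ℕ) (b : ℝ) (hb : 0 < b) (c : Fin n → ℝ) :
    ∫⁻ v : Fin n → ℝ, ENNReal.ofReal (Real.exp (-b * ∑ i, v i ^ 2 + ∑ i, c i * v i)) =
      ENNReal.ofReal ((Real.pi / b) ^ ((n : ℝ) / 2) * Real.exp ((∑ i, c i ^ 2) / (4 * b))) := by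
  obtain ⟨h1, h2⟩ := gb_gauss_integral n b hb c
  rw [← h2, ofReal_integral_eq_lintegral_ofReal h1]
  exact Filter.Eventually.of_forall fun v => (Real.exp_pos _).le

/-- The kernel. -/
lemma gb_kernel (n : ℕ) (ε : ℝ) (hε : 0 < ε) (u : Fin n → ℝ) :
    ∫ x : Fin n → ℝ, cexp (I * ∑ j, (x j : ℂ) * (u j : ℂ)) * (Real.exp (-ε * ∑ j, x j ^ 2) : ℂ)
      = (((Real.pi / ε) ^ ((n : ℝ) / 2) * Real.exp (-(4 * ε)⁻¹ * ∑ j, u j ^ 2) : ℝ) : ℂ) := by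
  have hb' : 0 < (ε : ℂ).re := by simpa using hε
  have h2 := GaussianFourier.integral_cexp_neg_mul_sum_add hb' (fun i => I * (u i : ℂ))
  have : ((Real.pi : ℂ) / ε) ^ ((Fintype.card (Fin n) : ℂ) / 2)
        = (((Real.pi / ε) ^ ((n : ℝ) / 2) : ℝ) : ℂ) := by
    rw [Complex.ofReal_cpow (by positivity)]; simp
  rw [this] at h2
  rw [Complex.ofReal_mul, ← (show _ = ((Real.exp (-(4 * ε)⁻¹ * ∑ j, u j ^ 2) : ℝ) : ℂ) from ?_)]
  · rw [← h2]
    congr 1; funext x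
    push_cast
    rw [← Complex.exp_add, add_comm, Finset.mul_sum (Finset.univ) (fun j => (x j : ℂ) * (u j : ℂ))]
    congr 2
    exact Finset.sum_congr rfl fun i _ => by ring
  · push_cast
    congr 1
    simp only [mul_pow, I_sq, ← Finset.mul_sum]
    have : (ε : ℂ) ≠ 0 := by exact_mod_cast hε.ne'
    field_simp

lemma gb_plancherel_eps (n : ℕ) (g : (Fin n → ℝ) → ℂ) (hg : Integrable g) (ε : ℝ) (hε : 0 < ε) :
    ∫⁻ x : Fin n → ℝ, ‖∫ ξ : Fin n → ℝ, g ξ * cexp (I * ∑ j, (x j : ℂ) * (ξ j : ℂ))‖ₑ ^ 2 *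
        ENNReal.ofReal (Real.exp (-ε * ∑ j, x j ^ 2))
      ≤ ENNReal.ofReal ((4 * Real.pi ^ 2) ^ ((n : ℝ) / 2)) * ∫⁻ ξ, ‖g ξ‖ₑ ^ 2 := by
  set H : (Fin n → ℝ) → (Fin n → ℝ) × (Fin n → ℝ) → ℂ := fun x p =>
    (g p.1 * (starRingEnd ℂ) (g p.2)) *
      (cexp (I * ∑ j, (x j : ℂ) * ((p.1 - p.2) j : ℂ)) * (Real.exp (-ε * ∑ j, x j ^ 2) : ℂ)) with hH
  set F : (Fin n → ℝ) → ℂ := fun x => ∫ ξ : Fin n → ℝ, g ξ * cexp (I * ∑ j, (x j : ℂ) * (ξ j : ℂ))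
    with hF
  have hgauss : Integrable (fun x : Fin n → ℝ => Real.exp (-ε * ∑ j, x j ^ 2)) := by
    simpa using (gb_gauss_integral n ε hε 0).1
  have hgs : Integrable (fun ξ => (starRingEnd ℂ) (g ξ)) := by
    simpa using (Complex.conjLIE.toContinuousLinearEquiv.toContinuousLinearMap.integrable_comp hg)
  have hHint : Integrable (Function.uncurry H) := by
    have h1 : Integrable (fun q : (Fin n → ℝ) × (Fin n → ℝ) × (Fin n → ℝ) =>
        ((Real.exp (-ε * ∑ j, q.1 j ^ 2) : ℝ) : ℂ) * (g q.2.1 * (starRingEnd ℂ) (g q.2.2))) :=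
      hgauss.ofReal.mul_prod (hg.mul_prod hgs)
    have hc : Continuous (fun q : (Fin n → ℝ) × (Fin n → ℝ) × (Fin n → ℝ) =>
        cexp (I * ∑ j, (q.1 j : ℂ) * ((q.2.1 - q.2.2) j : ℂ))) := by
      simp only [Pi.sub_apply]; fun_prop
    refine (h1.bdd_mul (c := 1) hc.aestronglyMeasurable ?_).congr ?_
    · refine Filter.Eventually.of_forall fun q => ?_
      rw [mul_comm]
      have := Complex.norm_exp_ofReal_mul_I (∑ j, q.1 j * (q.2.1 - q.2.2) j)
      push_cast at this
      exact this.le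
    · refine Filter.Eventually.of_forall fun q => ?_
      simp only [hH, Function.uncurry]; ring
  have hin : ∀ x, ∫ p, H x p = ((‖F x‖ ^ 2 * Real.exp (-ε * ∑ j, x j ^ 2) : ℝ) : ℂ) := by
    intro x
    have e1 : ∀ p, H x p = ((Real.exp (-ε * ∑ j, x j ^ 2) : ℝ) : ℂ) *
      ((g p.1 * cexp (I * ∑ j, (x j : ℂ) * (p.1 j : ℂ))) *
        (starRingEnd ℂ) (g p.2 * cexp (I * ∑ j, (x j : ℂ) * (p.2 j : ℂ)))) := by
      intro p
      have : cexp (I * ∑ j, (x j : ℂ) * ((p.1 - p.2) j : ℂ)) =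
          cexp (I * ∑ j, (x j : ℂ) * (p.1 j : ℂ)) *
            (starRingEnd ℂ) (cexp (I * ∑ j, (x j : ℂ) * (p.2 j : ℂ))) := by
        rw [← Complex.exp_conj, ← Complex.exp_add]
        congr 1
        simp [mul_sub, Finset.sum_sub_distrib]
        ring
      simp only [hH, this, map_mul]; ring
    simp_rw [e1]
    rw [integral_const_mul]
    have := integral_prod_mul (μ := (volume : Measure (Fin n → ℝ)))
      (ν := (volume : Measure (Fin n → ℝ)))
      (fun ξ => g ξ * cexp (I * ∑ j, (x j : ℂ) * (ξ j : ℂ)))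
      (fun ξ => (starRingEnd ℂ) (g ξ * cexp (I * ∑ j, (x j : ℂ) * (ξ j : ℂ))))
    rw [Measure.volume_eq_prod, this, integral_conj, Complex.mul_conj, Complex.normSq_eq_norm_sq]
    push_cast
    rw [mul_comm]
  have hswap : ∫ x, ∫ p, H x p = ∫ p, ∫ x, H x p := integral_integral_swap hHint
  set A : ℝ := (Real.pi / ε) ^ ((n : ℝ) / 2) with hA
  have hA0 : 0 ≤ A := by positivity
  set K : (Fin n → ℝ) → ℝ := fun u => A * Real.exp (-(4 * ε)⁻¹ * ∑ j, u j ^ 2) with hK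
  have hK0 : ∀ u, 0 ≤ K u := fun u => by positivity
  have hKc : Continuous K := by simp only [hK]; fun_prop
  have hout : ∀ p, ∫ x, H x p = (g p.1 * (starRingEnd ℂ) (g p.2)) * (K (p.1 - p.2) : ℂ) := by
    intro p
    simp only [hH]
    rw [integral_const_mul, gb_kernel n ε hε]
  have hKint : ∫⁻ u, ENNReal.ofReal (K u) = ENNReal.ofReal ((4 * Real.pi ^ 2) ^ ((n : ℝ) / 2)) := by
    have := gb_gauss_lintegral n (4 * ε)⁻¹ (by positivity) 0
    simp only [hK]
    simp_rw [ENNReal.ofReal_mul hA0]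
    rw [lintegral_const_mul' _ _ ENNReal.ofReal_ne_top]
    simp only [Pi.zero_apply, zero_mul, Finset.sum_const_zero, add_zero] at this
    rw [this, ← ENNReal.ofReal_mul hA0]
    congr 1
    simp only [ne_eq, OfNat.ofNat_ne_zero, not_false_eq_true, zero_pow, Finset.sum_const_zero,
      zero_div, Real.exp_zero, mul_one]
    rw [hA, ← Real.mul_rpow (by positivity) (by positivity)]
    congr 1
    field_simp
  -- left side as the norm of an integral
  have hint1 : Integrable (fun x => ‖F x‖ ^ 2 * Real.exp (-ε * ∑ j, x j ^ 2)) := by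
    have := hHint.integral_prod_left
    simp only [Function.uncurry] at this
    simp_rw [hin] at this
    exact this.re
  have hL : ∫⁻ x, ‖F x‖ₑ ^ 2 * ENNReal.ofReal (Real.exp (-ε * ∑ j, x j ^ 2))
      = ‖∫ x, ∫ p, H x p‖ₑ := by
    simp_rw [hin]
    rw [integral_complex_ofReal, ← ofReal_norm, Complex.norm_real, Real.norm_of_nonneg
      (integral_nonneg fun x => by positivity),
      ofReal_integral_eq_lintegral_ofReal hint1
        (Filter.Eventually.of_forall fun x => by positivity)]
    refine lintegral_congr fun x => ?_
    rw [ENNReal.ofReal_mul (by positivity), ENNReal.ofReal_pow (norm_nonneg _),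
      ofReal_norm]
  rw [hL, hswap]
  simp_rw [hout]
  have hgm : AEMeasurable (fun ξ => ‖g ξ‖ₑ ^ 2) := hg.1.enorm.pow_const 2
  have hm1 : AEMeasurable (fun p : (Fin n → ℝ) × (Fin n → ℝ) => ‖g p.1‖ₑ ^ 2 *
      ENNReal.ofReal (K (p.1 - p.2))) (volume.prod volume) := by
    refine AEMeasurable.mul (hgm.comp_fst) ?_
    exact (ENNReal.continuous_ofReal.comp
      (hKc.comp (continuous_fst.sub continuous_snd))).aemeasurable
  have hm2 : AEMeasurable (fun p : (Fin n → ℝ) × (Fin n → ℝ) => ‖g p.2‖ₑ ^ 2 *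
      ENNReal.ofReal (K (p.1 - p.2))) (volume.prod volume) := by
    refine AEMeasurable.mul (hgm.comp_snd) ?_
    exact (ENNReal.continuous_ofReal.comp
      (hKc.comp (continuous_fst.sub continuous_snd))).aemeasurable
  have hI1 : ∫⁻ p : (Fin n → ℝ) × (Fin n → ℝ), ‖g p.1‖ₑ ^ 2 * ENNReal.ofReal (K (p.1 - p.2))
      = ENNReal.ofReal ((4 * Real.pi ^ 2) ^ ((n : ℝ) / 2)) * ∫⁻ ξ, ‖g ξ‖ₑ ^ 2 := by
    rw [Measure.volume_eq_prod, lintegral_prod _ hm1]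
    simp only
    have : ∀ x, ∫⁻ y, ‖g x‖ₑ ^ 2 * ENNReal.ofReal (K (x - y)) =
        ENNReal.ofReal ((4 * Real.pi ^ 2) ^ ((n : ℝ) / 2)) * ‖g x‖ₑ ^ 2 := by
      intro x
      rw [lintegral_const_mul' _ _ (by simp),
        lintegral_sub_left_eq_self (fun u => ENNReal.ofReal (K u)) x, hKint, mul_comm]
    simp_rw [this]
    rw [lintegral_const_mul' _ _ ENNReal.ofReal_ne_top]
  have hI2 : ∫⁻ p : (Fin n → ℝ) × (Fin n → ℝ), ‖g p.2‖ₑ ^ 2 * ENNReal.ofReal (K (p.1 - p.2))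
      = ENNReal.ofReal ((4 * Real.pi ^ 2) ^ ((n : ℝ) / 2)) * ∫⁻ ξ, ‖g ξ‖ₑ ^ 2 := by
    rw [Measure.volume_eq_prod, lintegral_prod_symm _ hm2]
    simp only
    have : ∀ y, ∫⁻ x, ‖g y‖ₑ ^ 2 * ENNReal.ofReal (K (x - y)) =
        ENNReal.ofReal ((4 * Real.pi ^ 2) ^ ((n : ℝ) / 2)) * ‖g y‖ₑ ^ 2 := by
      intro x
      rw [lintegral_const_mul' _ _ (by simp),
        lintegral_sub_right_eq_self (fun u => ENNReal.ofReal (K u)) x, hKint, mul_comm]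
    simp_rw [this]
    rw [lintegral_const_mul' _ _ ENNReal.ofReal_ne_top]
  set R := ENNReal.ofReal ((4 * Real.pi ^ 2) ^ ((n : ℝ) / 2)) * ∫⁻ ξ, ‖g ξ‖ₑ ^ 2 with hR
  calc _ ≤ ∫⁻ p : (Fin n → ℝ) × (Fin n → ℝ),
        ‖(g p.1 * (starRingEnd ℂ) (g p.2)) * (K (p.1 - p.2) : ℂ)‖ₑ := enorm_integral_le_lintegral_enorm _
    _ ≤ ∫⁻ p : (Fin n → ℝ) × (Fin n → ℝ), ENNReal.ofReal (1/2) *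
        (‖g p.1‖ₑ ^ 2 * ENNReal.ofReal (K (p.1 - p.2)) +
          ‖g p.2‖ₑ ^ 2 * ENNReal.ofReal (K (p.1 - p.2))) := by
        refine lintegral_mono fun p => ?_
        simp only [← ofReal_norm]
        rw [← ENNReal.ofReal_pow (norm_nonneg _), ← ENNReal.ofReal_pow (norm_nonneg _),
          ← ENNReal.ofReal_mul (by positivity), ← ENNReal.ofReal_mul (by positivity),
          ← ENNReal.ofReal_add (mul_nonneg (by positivity) (hK0 _))
            (mul_nonneg (by positivity) (hK0 _)),
          ← ENNReal.ofReal_mul (by positivity)]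
        refine ENNReal.ofReal_le_ofReal ?_
        rw [norm_mul, norm_mul, RCLike.norm_conj, Complex.norm_real, Real.norm_of_nonneg (hK0 _)]
        nlinarith [mul_nonneg (sq_nonneg (‖g p.1‖ - ‖g p.2‖)) (hK0 (p.1 - p.2))]
    _ = ENNReal.ofReal (1/2) * (R + R) := by
        rw [lintegral_const_mul' _ _ ENNReal.ofReal_ne_top]
        congr 1
        rw [Measure.volume_eq_prod, lintegral_add_left' hm1, ← Measure.volume_eq_prod, hI1, hI2]
    _ = R := by
        rw [← two_mul, ← mul_assoc]
        have : ENNReal.ofReal (1/2) * 2 = 1 := by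
          rw [show (2 : ENNReal) = ENNReal.ofReal 2 by simp, ← ENNReal.ofReal_mul (by norm_num)]
          norm_num
        rw [this, one_mul]
    _ ≤ R := le_rfl

lemma gb_plancherel (n : ℕ) (g : (Fin n → ℝ) → ℂ) (hg : Integrable g) :
    ∫⁻ x : Fin n → ℝ, ‖∫ ξ : Fin n → ℝ, g ξ * cexp (I * ∑ j, (x j : ℂ) * (ξ j : ℂ))‖ₑ ^ 2
      ≤ ENNReal.ofReal ((4 * Real.pi ^ 2) ^ ((n : ℝ) / 2)) * ∫⁻ ξ, ‖g ξ‖ₑ ^ 2 := by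
  have hm : AEStronglyMeasurable (fun x : Fin n → ℝ =>
      ∫ ξ : Fin n → ℝ, g ξ * cexp (I * ∑ j, (x j : ℂ) * (ξ j : ℂ))) := by
    refine AEStronglyMeasurable.integral_prod_right'
      (f := fun p : (Fin n → ℝ) × (Fin n → ℝ) =>
        g p.2 * cexp (I * ∑ j, (p.1 j : ℂ) * (p.2 j : ℂ))) ?_
    refine AEStronglyMeasurable.mul hg.1.comp_snd ?_
    exact Continuous.aestronglyMeasurable (by fun_prop)
  set F : (Fin n → ℝ) → ℂ := fun x => ∫ ξ : Fin n → ℝ, g ξ * cexp (I * ∑ j, (x j : ℂ) * (ξ j : ℂ))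
    with hF
  have hlim := lintegral_tendsto_of_tendsto_of_monotone (μ := (volume : Measure (Fin n → ℝ)))
    (f := fun (k : ℕ) x => ‖F x‖ₑ ^ 2 *
      ENNReal.ofReal (Real.exp (-(1 / ((k : ℝ) + 1)) * ∑ j, x j ^ 2)))
    (F := fun x => ‖F x‖ₑ ^ 2) ?_ ?_ ?_
  · exact le_of_tendsto' hlim fun k => gb_plancherel_eps n g hg _ (by positivity)
  · intro k
    refine (hm.enorm.pow_const 2).mul ?_
    exact (ENNReal.continuous_ofReal.comp (by fun_prop)).aemeasurable
  · refine Filter.Eventually.of_forall fun x k l hkl => ?_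
    dsimp only
    gcongr
  · refine Filter.Eventually.of_forall fun x => ?_
    have h0 := tendsto_one_div_add_atTop_nhds_zero_nat (𝕜 := ℝ)
    have h1 : Filter.Tendsto (fun k : ℕ => ENNReal.ofReal
        (Real.exp (-(1 / ((k : ℝ) + 1)) * ∑ j, x j ^ 2))) Filter.atTop (nhds 1) := by
      have := (ENNReal.continuous_ofReal.comp Real.continuous_exp).continuousAt.tendsto.comp
        (h0.neg.mul_const (∑ j, x j ^ 2))
      simpa [Function.comp_def] using this
    have := ENNReal.Tendsto.const_mul (a := ‖F x‖ₑ ^ 2) h1 (Or.inl one_ne_zero)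
    simpa using this

lemma gb_slice (n : ℕ) (fhat : (Fin n → ℝ) → ℂ) (M : ℝ) (hf : ∀ ξ, ‖fhat ξ‖ ≤ M)
    (hm : AEStronglyMeasurable fhat) (y : Fin n → ℝ) :
    ∫⁻ x : Fin n → ℝ, ‖∫ ξ : Fin n → ℝ,
        (fhat ξ * (Real.exp (-∑ j, ξ j ^ 2 - ∑ j, y j * ξ j) : ℂ)) *
          cexp (I * ∑ j, (x j : ℂ) * (ξ j : ℂ))‖ₑ ^ 2
      ≤ ENNReal.ofReal ((4 * Real.pi ^ 2) ^ ((n : ℝ) / 2) *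
          (M ^ 2 * (Real.pi / 2) ^ ((n : ℝ) / 2))) *
        ENNReal.ofReal (Real.exp ((∑ j, y j ^ 2) / 2)) := by
  have hint : Integrable (fun ξ : Fin n → ℝ =>
      Real.exp (-∑ j, ξ j ^ 2 - ∑ j, y j * ξ j)) := by
    refine (gb_gauss_integral n 1 one_pos (fun j => - y j)).1.congr
      (Filter.Eventually.of_forall fun ξ => ?_)
    simp [sub_eq_add_neg]
  have hg : Integrable (fun ξ : Fin n → ℝ =>
      fhat ξ * (Real.exp (-∑ j, ξ j ^ 2 - ∑ j, y j * ξ j) : ℂ)) :=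
    Integrable.bdd_mul (c := M) hint.ofReal hm (Filter.Eventually.of_forall hf)
  refine (gb_plancherel n _ hg).trans ?_
  have hb : ∫⁻ ξ : Fin n → ℝ, ‖fhat ξ * (Real.exp (-∑ j, ξ j ^ 2 - ∑ j, y j * ξ j) : ℂ)‖ₑ ^ 2
      ≤ ENNReal.ofReal (M ^ 2) * ENNReal.ofReal ((Real.pi / 2) ^ ((n : ℝ) / 2) *
        Real.exp ((∑ j, y j ^ 2) / 2)) := by
    have h := gb_gauss_lintegral n 2 two_pos (fun j => -2 * y j)
    have e : (∑ j, (-2 * y j) ^ 2) / (4 * 2) = (∑ j, y j ^ 2) / 2 := by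
      simp only [mul_pow, ← Finset.mul_sum]; ring
    rw [e] at h
    rw [← h, ← lintegral_const_mul' _ _ ENNReal.ofReal_ne_top]
    refine lintegral_mono fun ξ => ?_
    rw [← ofReal_norm, ← ENNReal.ofReal_pow (norm_nonneg _), ← ENNReal.ofReal_mul (by positivity)]
    refine ENNReal.ofReal_le_ofReal ?_
    rw [norm_mul, mul_pow, Complex.norm_real, Real.norm_of_nonneg (Real.exp_pos _).le,
      ← Real.exp_nat_mul]
    have e2 : ((2 : ℕ) : ℝ) * (-∑ j, ξ j ^ 2 - ∑ j, y j * ξ j) =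
        -2 * ∑ j, ξ j ^ 2 + ∑ j, -2 * y j * ξ j := by
      simp only [mul_assoc, ← Finset.mul_sum]; push_cast; ring
    rw [e2]
    have := hf ξ
    gcongr
  refine (mul_le_mul_right hb _).trans (le_of_eq ?_)
  rw [← ENNReal.ofReal_mul (by positivity), ← ENNReal.ofReal_mul (by positivity),
    ← ENNReal.ofReal_mul (by positivity)]
  congr 1; ring

/-- if `f̂ ∈ L^∞(ℝ^n)` and `φ = G f̂`, then for every `0 ≤ t < 1/2`
the integral `∫_{ℂ^n} |φ(x+iy)|² e^{-(|x|²+|y|²)/2} e^{(2t/(1+2t))|y|²} dx dy` is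
finite. -/
theorem gauss_bargmann_necessary_weighted_L2
    (n : ℕ) (fhat : (Fin n → ℝ) → ℂ) (M : ℝ) (hf : ∀ ξ, ‖fhat ξ‖ ≤ M)
    (φ : (Fin n → ℂ) → ℂ)
    (hφ : ∀ z : Fin n → ℂ, φ z =
      Complex.exp ((∑ j, (z j) ^ 2) / 4) *
        ∫ ξ : Fin n → ℝ, fhat ξ * (Real.exp (-∑ j, (ξ j) ^ 2) : ℂ) *
          Complex.exp (Complex.I * ∑ j, z j * (ξ j : ℂ)))
    (t : ℝ) (ht0 : 0 ≤ t) (ht : t < 1 / 2) :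
    Integrable (fun p : (Fin n → ℝ) × (Fin n → ℝ) =>
      ‖φ (fun j => (p.1 j : ℂ) + Complex.I * (p.2 j : ℂ))‖ ^ 2 *
        Real.exp (-((∑ j, (p.1 j) ^ 2) + ∑ j, (p.2 j) ^ 2) / 2) *
        Real.exp ((2 * t / (1 + 2 * t)) * ∑ j, (p.2 j) ^ 2)) := by
  by_cases hm : AEStronglyMeasurable fhat
  swap
  · -- the integral is the junk value zero
    have hz : ∀ z, φ z = 0 := by
      intro z
      rw [hφ, integral_undef, mul_zero]
      intro hi
      apply hm
      have hc : Continuous (fun ξ : Fin n → ℝ => cexp (∑ j, (ξ j : ℂ) ^ 2) *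
          cexp (-(I * ∑ j, z j * (ξ j : ℂ)))) := by fun_prop
      refine (hi.1.mul hc.aestronglyMeasurable).congr (Filter.Eventually.of_forall fun ξ => ?_)
      simp only [Pi.mul_apply]
      have h1 : ((Real.exp (-∑ j, (ξ j) ^ 2) : ℝ) : ℂ) * cexp (∑ j, (ξ j : ℂ) ^ 2) = 1 := by
        push_cast
        rw [← Complex.exp_add]; simp
      have h2 : cexp (I * ∑ j, z j * (ξ j : ℂ)) * cexp (-(I * ∑ j, z j * (ξ j : ℂ))) = 1 := by
        rw [← Complex.exp_add]; simp
      calc _ = fhat ξ * (((Real.exp (-∑ j, (ξ j) ^ 2) : ℝ) : ℂ) * cexp (∑ j, (ξ j : ℂ) ^ 2)) *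
            (cexp (I * ∑ j, z j * (ξ j : ℂ)) * cexp (-(I * ∑ j, z j * (ξ j : ℂ)))) := by ring
        _ = fhat ξ := by rw [h1, h2]; ring
    simp [hz]
  set F : (Fin n → ℝ) × (Fin n → ℝ) → ℂ := fun p => ∫ ξ : Fin n → ℝ,
        (fhat ξ * (Real.exp (-∑ j, ξ j ^ 2 - ∑ j, p.2 j * ξ j) : ℂ)) *
          cexp (I * ∑ j, (p.1 j : ℂ) * (ξ j : ℂ)) with hF
  have hFm : AEStronglyMeasurable F (volume.prod volume) := by
    refine AEStronglyMeasurable.integral_prod_right'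
      (f := fun q : ((Fin n → ℝ) × (Fin n → ℝ)) × (Fin n → ℝ) =>
        (fhat q.2 * (Real.exp (-∑ j, q.2 j ^ 2 - ∑ j, q.1.2 j * q.2 j) : ℂ)) *
          cexp (I * ∑ j, (q.1.1 j : ℂ) * (q.2 j : ℂ))) ?_
    refine AEStronglyMeasurable.mul (AEStronglyMeasurable.mul hm.comp_snd ?_) ?_
    · exact Continuous.aestronglyMeasurable (by fun_prop)
    · exact Continuous.aestronglyMeasurable (by fun_prop)
  have h12 : 0 < 1 + 2 * t := by linarith
  have key : ∀ p : (Fin n → ℝ) × (Fin n → ℝ),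
      ‖φ (fun j => (p.1 j : ℂ) + Complex.I * (p.2 j : ℂ))‖ ^ 2 *
        Real.exp (-((∑ j, (p.1 j) ^ 2) + ∑ j, (p.2 j) ^ 2) / 2) *
        Real.exp ((2 * t / (1 + 2 * t)) * ∑ j, (p.2 j) ^ 2)
      = ‖F p‖ ^ 2 * Real.exp (-(1 / (1 + 2 * t)) * ∑ j, (p.2 j) ^ 2) := by
    intro p
    have e1 : ∫ ξ : Fin n → ℝ, fhat ξ * (Real.exp (-∑ j, (ξ j) ^ 2) : ℂ) *
          Complex.exp (Complex.I * ∑ j, ((p.1 j : ℂ) + Complex.I * (p.2 j : ℂ)) * (ξ j : ℂ))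
        = F p := by
      simp only [hF]
      congr 1; funext ξ
      rw [mul_assoc, mul_assoc]
      congr 1
      push_cast
      rw [← Complex.exp_add, ← Complex.exp_add]
      congr 1
      have : ∑ j, ((p.1 j : ℂ) + Complex.I * (p.2 j : ℂ)) * (ξ j : ℂ) =
          ∑ j, (p.1 j : ℂ) * (ξ j : ℂ) + I * ∑ j, (p.2 j : ℂ) * (ξ j : ℂ) := by
        rw [Finset.mul_sum, ← Finset.sum_add_distrib]
        exact Finset.sum_congr rfl fun j _ => by ring
      rw [this]
      linear_combination (∑ j, (p.2 j : ℂ) * (ξ j : ℂ)) * I_sq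
    rw [hφ, e1, norm_mul, mul_pow, Complex.norm_exp]
    have e2 : ((∑ j, ((p.1 j : ℂ) + Complex.I * (p.2 j : ℂ)) ^ 2) / 4).re =
        (∑ j, p.1 j ^ 2 - ∑ j, p.2 j ^ 2) / 4 := by
      rw [show (4 : ℂ) = ((4 : ℝ) : ℂ) by norm_num, Complex.div_ofReal_re, Complex.re_sum,
        ← Finset.sum_sub_distrib]
      congr 1
      refine Finset.sum_congr rfl fun j _ => ?_
      simp [sq]
    rw [e2, ← Real.exp_nat_mul]
    rw [mul_comm (Real.exp _) (‖F p‖ ^ 2), mul_assoc, mul_assoc, ← Real.exp_add, ← Real.exp_add]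
    congr 2
    push_cast
    field_simp
    ring
  simp_rw [key]
  have hmeas : AEStronglyMeasurable (fun p : (Fin n → ℝ) × (Fin n → ℝ) =>
      ‖F p‖ ^ 2 * Real.exp (-(1 / (1 + 2 * t)) * ∑ j, (p.2 j) ^ 2)) (volume.prod volume) :=
    (hFm.norm.pow 2).mul (Continuous.aestronglyMeasurable (by fun_prop))
  refine ⟨hmeas, ?_⟩
  rw [hasFiniteIntegral_iff_enorm, Measure.volume_eq_prod, lintegral_prod_symm _ hmeas.enorm]
  set C : ℝ := (4 * Real.pi ^ 2) ^ ((n : ℝ) / 2) * (M ^ 2 * (Real.pi / 2) ^ ((n : ℝ) / 2)) with hC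
  set a : ℝ := 1 / (1 + 2 * t) - 1 / 2 with ha
  have ha0 : 0 < a := by
    rw [ha, sub_pos]
    exact one_div_lt_one_div_of_lt h12 (by linarith)
  have hfin := gb_gauss_lintegral n a ha0 0
  refine lt_of_le_of_lt (b := ∫⁻ y : Fin n → ℝ, ENNReal.ofReal C *
    ENNReal.ofReal (Real.exp (-a * ∑ i, y i ^ 2 + ∑ i, (0 : Fin n → ℝ) i * y i))) ?_ ?_
  · refine lintegral_mono fun y => ?_
    have e : ∀ x : Fin n → ℝ, ‖‖F (x, y)‖ ^ 2 *
        Real.exp (-(1 / (1 + 2 * t)) * ∑ j, (y j) ^ 2)‖ₑ =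
        ENNReal.ofReal (Real.exp (-(1 / (1 + 2 * t)) * ∑ j, (y j) ^ 2)) * ‖F (x, y)‖ₑ ^ 2 := by
      intro x
      rw [mul_comm, Real.enorm_of_nonneg (by positivity), ENNReal.ofReal_mul (by positivity),
        ENNReal.ofReal_pow (norm_nonneg _), ofReal_norm]
    simp only [e]
    rw [lintegral_const_mul' _ _ ENNReal.ofReal_ne_top]
    refine (mul_le_mul_right (gb_slice n fhat M hf hm y) _).trans (le_of_eq ?_)
    rw [mul_left_comm, ← ENNReal.ofReal_mul (by positivity), ← Real.exp_add]
    congr 3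
    simp only [Pi.zero_apply, zero_mul, Finset.sum_const_zero, ha]
    ring
  · rw [lintegral_const_mul' _ _ ENNReal.ofReal_ne_top, hfin]
    exact ENNReal.mul_lt_top ENNReal.ofReal_lt_top ENNReal.ofReal_lt_top
end
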